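/- arXiv:0804.3846 — 9 statements merged into one kernel-verified Lean document; each statement's English description precedes it below -/
import Mathlib

section
/- Let p, q ∈ ℝ[x] be real polynomials of the same degree d, and suppose q has no real roots. Let p̄ and q̄ denote the degree-d homogenizations of p and q in two variables x₀, x₁ (so p̄(x,1) = p(x) and q̄(x,1) = q(x)). Then the map from ℙ¹(ℝ)×ℙ¹(ℝ) to itself sending ([x₀:x₁],[y₀:y₁]) to ([x₀:x₁], [q̄(x₀,x₁)·y₀ + p̄(x₀,x₁)·y₁ : q̄(x₀,x₁)·y₁]) is well defined (i.e., for (x₀,x₁) ≠ (0,0) and (y₀,y₁) ≠ (0,0) the pair (q̄(x₀,x₁)y₀ + p̄(x₀,x₁)y₁, q̄(x₀,x₁)y₁) is nonzero, and the resulting point is independent of the choice of homogeneous representatives) and is a bijection of ℙ¹(ℝ)×ℙ¹(ℝ). -/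
/-!
Since `q` has no real roots, its homogenization `q̄` vanishes at no nonzero vector: for `x₁ ≠ 0` it
equals `x₁ ^ d * q(x₀/x₁)`, and at `x₁ = 0` only the leading term survives
(`homogEval_natDegree_ne_zero`). As `p̄` and `q̄` are homogeneous of the same degree, the ratio
`p̄/q̄` is a function on `ℙ¹(ℝ)` (`homogSlope`). Dividing the second component of the map by `q̄(x)`
shows that on the fibre over `[x]` the map is the projective transformation induced by the linear
shear `(y₀, y₁) ↦ (y₀ + (p̄/q̄)(x) y₁, y₁)`, which is invertible. A family of bijections of the second
factor indexed by the first factor assembles to a bijection of the product (`Equiv.prodShear`).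
-/

noncomputable section

/-- The degree-`d` homogenization of a polynomial `p ∈ ℝ[x]`, evaluated at `(x₀, x₁)`:
`p̄(x₀,x₁) = ∑_{i ≤ d} coeff_i(p) · x₀^i · x₁^{d−i}`, so that `p̄(x,1) = p(x)`. -/
def homogEval (p : Polynomial ℝ) (d : ℕ) (x₀ x₁ : ℝ) : ℝ :=
  ∑ i ∈ Finset.range (d + 1), p.coeff i * x₀ ^ i * x₁ ^ (d - i)

/-- Homogeneity of the homogenization. It holds whatever the degree of `p`, because `homogEval`
truncates to the coefficients of index at most `d`. -/
lemma homogEval_smul (p : Polynomial ℝ) (d : ℕ) (t a b : ℝ) :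
    homogEval p d (t * a) (t * b) = t ^ d * homogEval p d a b := by
  unfold homogEval
  rw [Finset.mul_sum]
  refine Finset.sum_congr rfl fun i hi => ?_
  have hid : i ≤ d := Nat.lt_succ_iff.mp (Finset.mem_range.mp hi)
  rw [mul_pow, mul_pow, ← pow_mul_pow_sub t hid]
  ring

lemma homogEval_one (p : Polynomial ℝ) (a : ℝ) :
    homogEval p p.natDegree a 1 = p.eval a := by
  simp [homogEval, Polynomial.eval_eq_sum_range]

lemma homogEval_zero (p : Polynomial ℝ) (d : ℕ) (a : ℝ) :
    homogEval p d a 0 = p.coeff d * a ^ d := by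
  unfold homogEval
  rw [Finset.sum_range_succ, Finset.sum_eq_zero, zero_add]
  · simp
  · intro i hi
    have hid : d - i ≠ 0 := by have := Finset.mem_range.mp hi; omega
    rw [zero_pow hid, mul_zero]

lemma homogEval_natDegree_ne_zero {q : Polynomial ℝ} (hq : ∀ x : ℝ, q.eval x ≠ 0)
    {x : Fin 2 → ℝ} (hx : x ≠ 0) : homogEval q q.natDegree (x 0) (x 1) ≠ 0 := by
  by_cases h1 : x 1 = 0
  · have h0 : x 0 ≠ 0 := fun h0 => hx (by ext i; fin_cases i <;> simp [h0, h1])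
    have hq0 : q ≠ 0 := by rintro rfl; exact hq 0 Polynomial.eval_zero
    rw [h1, homogEval_zero]
    exact mul_ne_zero (Polynomial.leadingCoeff_ne_zero.mpr hq0) (pow_ne_zero _ h0)
  · have h := homogEval_smul q q.natDegree (x 1) (x 0 / x 1) 1
    rw [mul_div_cancel₀ _ h1, mul_one, homogEval_one] at h
    rw [h]
    exact mul_ne_zero (pow_ne_zero _ h1) (hq _)

/-- The function `p̄/q̄` on `ℙ¹(ℝ)`, both homogenizations being taken in degree `d`. At a zero of
`q̄` it takes the junk value `0`. -/
def homogSlope (p q : Polynomial ℝ) (d : ℕ) : Projectivization ℝ (Fin 2 → ℝ) → ℝ :=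
  Projectivization.lift
    (fun x => homogEval p d (x.1 0) (x.1 1) / homogEval q d (x.1 0) (x.1 1)) (by
      rintro ⟨a, ha⟩ ⟨b, hb⟩ t h
      dsimp only at h
      subst h
      have ht : t ≠ 0 := by rintro rfl; exact ha (zero_smul _ _)
      simp only [Pi.smul_apply, smul_eq_mul, homogEval_smul]
      exact mul_div_mul_left _ _ (pow_ne_zero _ ht))

/-- The linear shear `(y₀, y₁) ↦ (y₀ + r y₁, y₁)` of `ℝ²`. -/
def shear (r : ℝ) : (Fin 2 → ℝ) ≃ₗ[ℝ] (Fin 2 → ℝ) where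
  toFun y := ![y 0 + r * y 1, y 1]
  invFun y := ![y 0 - r * y 1, y 1]
  map_add' y z := by ext i; fin_cases i <;> simp; ring
  map_smul' c y := by ext i; fin_cases i <;> simp; ring
  left_inv y := by ext i; fin_cases i <;> simp
  right_inv y := by ext i; fin_cases i <;> simp

/-- if `p, q` have the same degree and `q` has no real roots, then
`([x₀:x₁],[y₀:y₁]) ↦ ([x₀:x₁], [q̄(x₀,x₁)y₀ + p̄(x₀,x₁)y₁ : q̄(x₀,x₁)y₁])` is a
well-defined bijection of `ℙ¹(ℝ) × ℙ¹(ℝ)`: the image vector is nonzero for nonzero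
representatives, and there is a bijection `Φ` of `ℙ¹(ℝ) × ℙ¹(ℝ)` given on
representatives by this formula (hence independent of the choice of representatives). -/
theorem torus_translation_automorphism (p q : Polynomial ℝ)
    (hdeg : p.degree = q.degree) (hq : ∀ x : ℝ, q.eval x ≠ 0) :
    ∃ Φ : (Projectivization ℝ (Fin 2 → ℝ) × Projectivization ℝ (Fin 2 → ℝ)) ≃ (Projectivization ℝ (Fin 2 → ℝ) × Projectivization ℝ (Fin 2 → ℝ)),
      ∀ (x y : Fin 2 → ℝ) (hx : x ≠ 0) (hy : y ≠ 0),
        ∃ hw : (![homogEval q q.natDegree (x 0) (x 1) * y 0 +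
                    homogEval p q.natDegree (x 0) (x 1) * y 1,
                  homogEval q q.natDegree (x 0) (x 1) * y 1] : Fin 2 → ℝ) ≠ 0,
          Φ (Projectivization.mk ℝ x hx, Projectivization.mk ℝ y hy) =
            (Projectivization.mk ℝ x hx,
              Projectivization.mk ℝ
                ![homogEval q q.natDegree (x 0) (x 1) * y 0 +
                    homogEval p q.natDegree (x 0) (x 1) * y 1,
                  homogEval q q.natDegree (x 0) (x 1) * y 1] hw) := by
  refine ⟨Equiv.prodShear (Equiv.refl _)
    fun P => MulAction.toPerm (shear (homogSlope p q q.natDegree P)), fun x y hx hy => ?_⟩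
  have hQ := homogEval_natDegree_ne_zero hq hx
  have hslope : homogSlope p q q.natDegree (Projectivization.mk ℝ x hx) =
      homogEval p q.natDegree (x 0) (x 1) / homogEval q q.natDegree (x 0) (x 1) := rfl
  -- The vector in the formula is `q̄(x)` times the sheared vector.
  have key : (![homogEval q q.natDegree (x 0) (x 1) * y 0 +
        homogEval p q.natDegree (x 0) (x 1) * y 1,
      homogEval q q.natDegree (x 0) (x 1) * y 1] : Fin 2 → ℝ) =
      homogEval q q.natDegree (x 0) (x 1) •
        shear (homogSlope p q q.natDegree (Projectivization.mk ℝ x hx)) y := by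
    rw [hslope]
    ext i
    fin_cases i
    · simp [shear]
      field_simp
    · simp [shear]
  have hw := key ▸ smul_ne_zero hQ ((LinearEquiv.map_ne_zero_iff _).mpr hy)
  refine ⟨hw, Prod.ext rfl ?_⟩
  change shear (homogSlope p q q.natDegree (Projectivization.mk ℝ x hx)) •
    Projectivization.mk ℝ y hy = _
  rw [Projectivization.smul_mk, eq_comm, Projectivization.mk_eq_mk_iff']
  exact ⟨_, key.symm⟩
end
end

section
/- Let p, q, r ∈ ℝ[x] be real polynomials such that r has no roots in the interval [−1,1] and p² + q² = r². Define φ : S² → ℝ³ by φ(x,y,z) = (x, (y·p(x) − z·q(x))/r(x), (y·q(x) + z·p(x))/r(x)). Then φ maps S² into S², and φ is a bijection from S² onto S²; its inverse is the map of the same form obtained by replacing q with −q. -/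
open Polynomial

noncomputable section

/-- The unit sphere in `ℝ³`. -/
def unitSphere3 : Set (ℝ × ℝ × ℝ) :=
  {v | v.1 ^ 2 + v.2.1 ^ 2 + v.2.2 ^ 2 = 1}

/-- The map `φ(x,y,z) = (x, (y·p(x) − z·q(x))/r(x), (y·q(x) + z·p(x))/r(x))`. -/
def sphereRotationMap (p q r : ℝ[X]) : ℝ × ℝ × ℝ → ℝ × ℝ × ℝ := fun v =>
  (v.1, (v.2.1 * p.eval v.1 - v.2.2 * q.eval v.1) / r.eval v.1,
    (v.2.1 * q.eval v.1 + v.2.2 * p.eval v.1) / r.eval v.1)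

/-! On the slice of the sphere at height `x`, the map is multiplication of `y + iz` by
`(p(x) + i q(x)) / r(x)`, a complex number of modulus one because `p² + q² = r²`. It therefore
preserves `y² + z²` (`sphereRotationMap_mapsTo`), and multiplication by the conjugate, which is
the same map with `-q` in place of `q`, undoes it (`sphereRotationMap_neg_leftInvOn`). The
hypotheses are stable under `q ↦ -q`, so both facts hold with the roles of the two maps
exchanged, and bijectivity follows. -/

lemma fst_mem_Icc_of_mem_unitSphere3 {v : ℝ × ℝ × ℝ} (hv : v ∈ unitSphere3) :
    v.1 ∈ Set.Icc (-1 : ℝ) 1 := by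
  simp only [unitSphere3, Set.mem_ofPred_eq] at hv
  constructor <;> nlinarith [sq_nonneg v.2.1, sq_nonneg v.2.2]

lemma eval_sq_add_sq {p q r : ℝ[X]} (hpqr : p ^ 2 + q ^ 2 = r ^ 2) (x : ℝ) :
    p.eval x ^ 2 + q.eval x ^ 2 = r.eval x ^ 2 := by
  simpa using congrArg (Polynomial.eval x) hpqr

lemma sphereRotationMap_mapsTo {p q r : ℝ[X]}
    (hr : ∀ x ∈ Set.Icc (-1 : ℝ) 1, r.eval x ≠ 0) (hpqr : p ^ 2 + q ^ 2 = r ^ 2) :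
    Set.MapsTo (sphereRotationMap p q r) unitSphere3 unitSphere3 := by
  intro v hv
  have h0 := hr v.1 (fst_mem_Icc_of_mem_unitSphere3 hv)
  have h1 := eval_sq_add_sq hpqr v.1
  simp only [unitSphere3, sphereRotationMap, Set.mem_ofPred_eq] at hv ⊢
  field_simp
  linear_combination (r.eval v.1 ^ 2) * hv + (v.2.1 ^ 2 + v.2.2 ^ 2) * h1

lemma sphereRotationMap_neg_leftInvOn {p q r : ℝ[X]}
    (hr : ∀ x ∈ Set.Icc (-1 : ℝ) 1, r.eval x ≠ 0) (hpqr : p ^ 2 + q ^ 2 = r ^ 2) :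
    Set.LeftInvOn (sphereRotationMap p (-q) r) (sphereRotationMap p q r) unitSphere3 := by
  intro v hv
  have h0 := hr v.1 (fst_mem_Icc_of_mem_unitSphere3 hv)
  have h1 := eval_sq_add_sq hpqr v.1
  obtain ⟨x, y, z⟩ := v
  simp only [sphereRotationMap, eval_neg, Prod.mk.injEq, true_and] at h0 h1 ⊢
  constructor
  · field_simp
    linear_combination y * h1
  · field_simp
    linear_combination z * h1

/-- if `r` has no roots in `[−1,1]` and `p² + q² = r²`, then `φ` maps `S²`
into `S²`, is a bijection of `S²` onto `S²`, and the map of the same form with `q`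
replaced by `−q` is its inverse on `S²`. -/
theorem sphereRotationMap_bijOn (p q r : ℝ[X])
    (hr : ∀ x ∈ Set.Icc (-1 : ℝ) 1, r.eval x ≠ 0)
    (hpqr : p ^ 2 + q ^ 2 = r ^ 2) :
    Set.MapsTo (sphereRotationMap p q r) unitSphere3 unitSphere3 ∧
      Set.BijOn (sphereRotationMap p q r) unitSphere3 unitSphere3 ∧
      Set.InvOn (sphereRotationMap p (-q) r) (sphereRotationMap p q r)
        unitSphere3 unitSphere3 := by
  have hneg : p ^ 2 + (-q) ^ 2 = r ^ 2 := by rwa [neg_sq]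
  have hmaps := sphereRotationMap_mapsTo hr hpqr
  have hinv : Set.InvOn (sphereRotationMap p (-q) r) (sphereRotationMap p q r)
      unitSphere3 unitSphere3 := by
    refine ⟨sphereRotationMap_neg_leftInvOn hr hpqr, ?_⟩
    simpa only [neg_neg] using sphereRotationMap_neg_leftInvOn hr hneg
  exact ⟨hmaps, hinv.bijOn hmaps (sphereRotationMap_mapsTo hr hneg), hinv⟩
end
end

section
/- Let e be a nonzero natural number and let c ∈ ℝ. Let f, g, h be elements of the quotient ring ℝ[X]/((X−c)^e) such that X² + f² = 1 and X² + g² + h² = 1 hold in ℝ[X]/((X−c)^e). Assume moreover that f and g have the same value at c, and that this common value f(c) = g(c) is nonzero. Then there exists a ∈ ℝ[X]/((X−c)^e) such that (1−a²)·f = (1+a²)·g and 2a·f = (1+a²)·h hold in ℝ[X]/((X−c)^e); moreover a can be chosen so that 1+a² is invertible in ℝ[X]/((X−c)^e). -/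
/-!
The ring `ℝ[X]/((X−c)^e)` is local with residue map `u ↦ u(c)`, so an element is a unit as soon as
its value at `c` is nonzero. Since `(f + g)(c) = 2 f(c) ≠ 0`, the half-angle formula
`tan (θ/2) = sin θ / (1 + cos θ)`, with `cos θ = g / f` and `sin θ = h / f`, makes sense and
suggests `a = h / (f + g)`. From `f² = g² + h²` one gets `1 + a² = 2f / (f + g)` and
`1 - a² = 2g / (f + g)`, and everything follows.
-/

open Polynomial

noncomputable section

/-- Evaluation at `c` on the quotient ring `ℝ[X]/((X−c)^e)`, for `e ≠ 0`. -/
def evalAtQuot (c : ℝ) (e : ℕ) (he : e ≠ 0) :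
    (ℝ[X] ⧸ Ideal.span {(X - C c) ^ e}) →+* ℝ :=
  Ideal.Quotient.lift _ (evalRingHom c) (by
    intro a ha
    rw [Ideal.mem_span_singleton] at ha
    obtain ⟨b, rfl⟩ := ha
    simp [zero_pow he])

/-- Nonvanishing at `c` makes a representing polynomial coprime to `(X−c)^e`, and a Bézout relation
gives the inverse. -/
theorem isUnit_of_evalAtQuot_ne_zero (c : ℝ) (e : ℕ) (he : e ≠ 0)
    (u : ℝ[X] ⧸ Ideal.span {(X - C c) ^ e}) (hu : evalAtQuot c e he u ≠ 0) : IsUnit u := by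
  obtain ⟨p, rfl⟩ := Ideal.Quotient.mk_surjective u
  have hp : p.eval c ≠ 0 := by simpa [evalAtQuot] using hu
  have hcop : IsCoprime ((X - C c) ^ e) p := by
    refine IsCoprime.pow_left ?_
    rw [(irreducible_X_sub_C c).coprime_iff_not_dvd, dvd_iff_isRoot]
    exact hp
  obtain ⟨a, b, hab⟩ := hcop
  refine IsUnit.of_mul_eq_one (Ideal.Quotient.mk _ b) ?_
  rw [← map_mul, ← map_one (Ideal.Quotient.mk _), Ideal.Quotient.eq, Ideal.mem_span_singleton]
  exact ⟨-a, by linear_combination hab⟩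

/-- in `ℝ[X]/((X−c)^e)` with `e ≠ 0`, if `X² + f² = 1` and
`X² + g² + h² = 1`, `f(c) = g(c)` and this common value is nonzero, then there exists
`a` with `(1−a²)f = (1+a²)g` and `2af = (1+a²)h`; moreover `a` can be chosen so that
`1+a²` is invertible. -/
theorem rotation_parameter_in_jet_ring (c : ℝ) (e : ℕ) (he : e ≠ 0)
    (f g h : ℝ[X] ⧸ Ideal.span {(X - C c) ^ e})
    (hf : (Ideal.Quotient.mk (Ideal.span {(X - C c) ^ e}) X) ^ 2 + f ^ 2 = 1)
    (hgh : (Ideal.Quotient.mk (Ideal.span {(X - C c) ^ e}) X) ^ 2 + g ^ 2 + h ^ 2 = 1)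
    (hval : evalAtQuot c e he f = evalAtQuot c e he g)
    (hne : evalAtQuot c e he f ≠ 0) :
    ∃ a : ℝ[X] ⧸ Ideal.span {(X - C c) ^ e},
      (1 - a ^ 2) * f = (1 + a ^ 2) * g ∧ 2 * a * f = (1 + a ^ 2) * h ∧
      IsUnit (1 + a ^ 2) := by
  have hs : IsUnit (f + g) := by
    apply isUnit_of_evalAtQuot_ne_zero c e he
    rw [map_add, ← hval]
    simpa using hne
  have hfu : IsUnit f := isUnit_of_evalAtQuot_ne_zero c e he f hne
  have h2 : IsUnit (2 : ℝ[X] ⧸ Ideal.span {(X - C c) ^ e}) :=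
    isUnit_of_evalAtQuot_ne_zero c e he 2 (by
      rw [← one_add_one_eq_two, map_add, map_one]
      norm_num)
  obtain ⟨u, hu⟩ := hs.exists_right_inv
  have hrel : f ^ 2 = g ^ 2 + h ^ 2 := by linear_combination hf - hgh
  have hplus : 1 + (h * u) ^ 2 = 2 * f * u := by
    linear_combination (-u ^ 2) * hrel + (2 * f * u - (f + g) * u - 1) * hu
  have hminus : 1 - (h * u) ^ 2 = 2 * g * u := by
    linear_combination u ^ 2 * hrel + (2 * g * u - (f + g) * u - 1) * hu
  refine ⟨h * u, ?_, ?_, ?_⟩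
  · rw [hplus, hminus]
    ring
  · rw [hplus]
    ring
  · rw [hplus]
    exact (h2.mul hfu).mul (IsUnit.of_mul_eq_one (f + g) (by rw [mul_comm, hu]))
end
end

section
/- Let c ∈ ℝ, let e be a nonzero natural number, and let f ∈ ℝ[X] satisfy f(c) ≠ 0 and X² + f² ≡ 1 (mod (X−c)^e). Then for every natural number e' ≥ e there exists F ∈ ℝ[X] such that F ≡ f (mod (X−c)^e) and X² + F² ≡ 1 (mod (X−c)^{e'}). -/
/-!
The lift is built one power of `X - c` at a time. If `X² + F² - 1 = (X - c)ⁿ g` with `n ≥ 1`, then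
replacing `F` by `F + a (X - c)ⁿ` replaces `g` by `g + 2 a F + a² (X - c)ⁿ`, whose value at `c` is
`g(c) + 2 a F(c)`. Since `F(c) = f(c) ≠ 0`, a real `a` makes this value zero, which gains one more
factor `X - c`.
-/

open Polynomial

/-- Hensel-type lifting: if `f(c) ≠ 0` and `X² + f² ≡ 1 (mod (X−c)^e)`
with `e ≠ 0`, then for every `e' ≥ e` there is `F` with `F ≡ f (mod (X−c)^e)` and
`X² + F² ≡ 1 (mod (X−c)^{e'})`. -/
theorem circle_equation_lifting (c : ℝ) (e : ℕ) (he : e ≠ 0) (f : ℝ[X])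
    (hfc : f.eval c ≠ 0) (hf : (X - C c) ^ e ∣ X ^ 2 + f ^ 2 - 1) :
    ∀ e' : ℕ, e ≤ e' → ∃ F : ℝ[X],
      (X - C c) ^ e ∣ F - f ∧ (X - C c) ^ e' ∣ X ^ 2 + F ^ 2 - 1 := by
  intro e' h
  induction e', h using Nat.le_induction with
  | base => exact ⟨f, by simp, hf⟩
  | succ n hn ih =>
    obtain ⟨F, hFf, g, hg⟩ := ih
    have hFc : F.eval c = f.eval c := by
      have h1 : (X - C c) ∣ F - f := (dvd_pow_self _ he).trans hFf
      rw [dvd_iff_isRoot, IsRoot.def, eval_sub] at h1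
      exact sub_eq_zero.mp h1
    have hF0 : F.eval c ≠ 0 := hFc ▸ hfc
    -- One Newton step: `a` solves the linearized equation `g(c) + 2 a F(c) = 0`.
    obtain ⟨a, ha⟩ : ∃ a : ℝ, g.eval c + 2 * a * F.eval c = 0 :=
      ⟨-g.eval c / (2 * F.eval c), by field_simp; ring⟩
    refine ⟨F + C a * (X - C c) ^ n, ?_, ?_⟩
    · have h2 : F + C a * (X - C c) ^ n - f = (F - f) + C a * (X - C c) ^ n := by ring
      rw [h2]
      exact dvd_add hFf ((pow_dvd_pow _ hn).mul_left _)
    · have h3 : X ^ 2 + (F + C a * (X - C c) ^ n) ^ 2 - 1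
          = (X - C c) ^ n * (g + 2 * C a * F + C a ^ 2 * (X - C c) ^ n) := by
        linear_combination hg
      rw [h3, pow_succ]
      apply mul_dvd_mul_left
      -- The quadratic term vanishes at `c` because `n ≥ e ≥ 1`.
      have hn0 : n ≠ 0 := by omega
      rw [dvd_iff_isRoot, IsRoot.def]
      simpa [hn0] using ha
end

section
/- Let c₁, …, c_ℓ be pairwise distinct real numbers, let e₁, …, e_ℓ be positive integers, and let f₁, …, f_ℓ ∈ ℝ[X] be arbitrary polynomials. Then there exist polynomials p, q ∈ ℝ[X] of the same degree such that q has no real roots and p ≡ f_i·q (mod (X−c_i)^{e_i}) for every i = 1, …, ℓ. -/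
open Polynomial

/-!
Put `M = ∏ i, (X - c i) ^ e i`. By the Chinese Remainder Theorem there is `F` congruent to each
`f i` modulo `(X - c i) ^ e i`, and after reduction modulo `M` it has degree less than that of `M`.
With `G = (X * M) ^ 2`, which vanishes modulo `M`, the polynomials `p = G + F` and `q = G + 1`
satisfy `p ≡ F ≡ f i * q`; `q` is at least `1` on `ℝ`, and `G` dominates the degree of both.
The factor `X` makes `G` nonconstant even when `M = 1`, that is, when there are no conditions.
-/

/-- Given pairwise distinct reals `c₁,…,c_ℓ`, positive integers
`e₁,…,e_ℓ` and arbitrary polynomials `f₁,…,f_ℓ`, there are polynomials `p, q` of the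
same degree with `q` without real roots and `p ≡ f_i·q (mod (X−c_i)^{e_i})` for all `i`. -/
theorem exists_rational_function_with_prescribed_jets
    (ℓ : ℕ) (c : Fin ℓ → ℝ) (hc : Function.Injective c)
    (e : Fin ℓ → ℕ) (he : ∀ i, 0 < e i) (f : Fin ℓ → ℝ[X]) :
    ∃ p q : ℝ[X], p.degree = q.degree ∧ (∀ x : ℝ, q.eval x ≠ 0) ∧
      ∀ i, (X - C (c i)) ^ e i ∣ p - f i * q := by
  obtain ⟨F₀, hF₀⟩ := Ideal.exists_forall_sub_mem_ideal
    (I := fun i => Ideal.span {(X - C (c i)) ^ e i})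
    (fun i j hij => (Ideal.isCoprime_span_singleton_iff _ _).2
      (pairwise_coprime_X_sub_C hc hij).pow) f
  set M : ℝ[X] := ∏ i, (X - C (c i)) ^ e i with hM
  have hMm : M.Monic := monic_prod_of_monic _ _ fun i _ => (monic_X_sub_C _).pow _
  have hdvd (i) : (X - C (c i)) ^ e i ∣ M := Finset.dvd_prod_of_mem _ (Finset.mem_univ i)
  set G : ℝ[X] := (X * M) ^ 2 with hG
  have hdG : G.degree = ((2 * (1 + M.natDegree) : ℕ) : WithBot ℕ) := by
    have hm : (X * M).Monic := monic_X.mul hMm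
    rw [hG, degree_eq_natDegree (hm.pow 2).ne_zero, hm.natDegree_pow,
      monic_X.natDegree_mul hMm, natDegree_X]
  have hF : (F₀ %ₘ M).degree < G.degree := by
    refine (degree_modByMonic_lt F₀ hMm).trans ?_
    rw [hdG, degree_eq_natDegree hMm.ne_zero, Nat.cast_lt]
    omega
  have h1 : (1 : ℝ[X]).degree < G.degree := by
    rw [hdG, degree_one, ← Nat.cast_zero, Nat.cast_lt]
    omega
  refine ⟨G + F₀ %ₘ M, G + 1, ?_, fun x => ?_, fun i => ?_⟩
  · rw [degree_add_eq_left_of_degree_lt hF, degree_add_eq_left_of_degree_lt h1]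
  · simp only [hG, eval_add, eval_pow, eval_one]
    positivity
  · have hi : (X - C (c i)) ^ e i ∣ F₀ - f i :=
      Ideal.mem_span_singleton.1 (hF₀ i)
    have key : G + F₀ %ₘ M - f i * (G + 1)
        = (F₀ - f i) + M * ((1 - f i) * (X ^ 2 * M) - F₀ /ₘ M) := by
      rw [hG]
      linear_combination modByMonic_add_div F₀ M
    rw [key]
    exact dvd_add hi ((hdvd i).mul_right _)
end

section
/- Let c ∈ ℝ with −1 < c < 1 and let e be a positive integer. Then there exists a polynomial f ∈ ℝ[X] of degree less than e such that f(c) = √(1−c²) and X² + f² ≡ 1 (mod (X−c)^e). (One may take f to be the Taylor polynomial of √(1−x²) at c of order e−1.) -/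
open Polynomial

/-!
The polynomial is built by Newton–Hensel lifting of the root `√(1−c²)` of `T² + c² − 1`, by
induction on `e`. If `X² + f² − 1 = (X−c)^n g`, then replacing `f` by `f + a (X−c)^n` turns the
cofactor `g` into `g + 2 a f + a² (X−c)^n`. For `n ≥ 1` its value at `c` is `g(c) + 2 a √(1−c²)`,
which vanishes for a suitable `a` since `√(1−c²) ≠ 0`.
-/

/-- For `−1 < c < 1` and `e ≥ 1` there is a polynomial `f` of degree `< e`
with `f(c) = √(1−c²)` and `X² + f² ≡ 1 (mod (X−c)^e)` (the Taylor polynomial of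
`√(1−x²)` at `c` of order `e−1`). -/
theorem exists_taylor_polynomial_of_circle (c : ℝ) (hc₁ : -1 < c) (hc₂ : c < 1)
    (e : ℕ) (he : 0 < e) :
    ∃ f : ℝ[X], f.degree < (e : ℕ) ∧ f.eval c = Real.sqrt (1 - c ^ 2) ∧
      (X - C c) ^ e ∣ X ^ 2 + f ^ 2 - 1 := by
  have hpos : 0 < 1 - c ^ 2 := by nlinarith
  have hs : Real.sqrt (1 - c ^ 2) ≠ 0 := (Real.sqrt_pos.2 hpos).ne'
  induction e, he using Nat.le_induction with
  | base =>
    refine ⟨C (Real.sqrt (1 - c ^ 2)), ?_, by simp, ?_⟩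
    · exact degree_C_le.trans_lt (by norm_num)
    · rw [Nat.succ_eq_add_one, zero_add, pow_one, dvd_iff_isRoot]
      simp [IsRoot, Real.sq_sqrt hpos.le]
  | succ n hn ih =>
    obtain ⟨f, hdeg, hval, g, hg⟩ := ih
    have hn0 : n ≠ 0 := by omega
    set a : ℝ := -g.eval c / (2 * Real.sqrt (1 - c ^ 2)) with ha
    refine ⟨f + C a * (X - C c) ^ n, ?_, by simp [hval, hn0], ?_⟩
    · refine (degree_add_le _ _).trans_lt (max_lt (hdeg.trans (by exact_mod_cast n.lt_succ_self)) ?_)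
      rw [← smul_eq_C_mul]
      refine (degree_smul_le _ _).trans_lt ?_
      rw [degree_pow, degree_X_sub_C, nsmul_one]
      exact_mod_cast n.lt_succ_self
    · have hfac : X ^ 2 + (f + C a * (X - C c) ^ n) ^ 2 - 1 =
          (X - C c) ^ n * (g + 2 * C a * f + C a ^ 2 * (X - C c) ^ n) := by
        linear_combination hg
      rw [hfac, pow_succ]
      refine mul_dvd_mul_left _ (dvd_iff_isRoot.2 ?_)
      simp only [IsRoot, eval_add, eval_mul, eval_pow, eval_sub, eval_X, eval_C, eval_ofNat,
        sub_self, zero_pow hn0, hval, ha]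
      field_simp
      ring
end

section
/- Let c₁, …, c_ℓ be pairwise distinct real numbers in the open interval (−1,1), let e₁, …, e_ℓ be positive integers, and for each i let f_i, g_i, h_i ∈ ℝ[X] satisfy X² + f_i² ≡ 1 (mod (X−c_i)^{e_i}) and X² + g_i² + h_i² ≡ 1 (mod (X−c_i)^{e_i}), with f_i(c_i) = g_i(c_i) and f_i(c_i) ≠ 0. Then there exists a single polynomial a ∈ ℝ[X] such that for every i: (1−a²)·f_i ≡ (1+a²)·g_i (mod (X−c_i)^{e_i}) and 2a·f_i ≡ (1+a²)·h_i (mod (X−c_i)^{e_i}). -/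
open Polynomial

/-!
Write `m = (X - c) ^ e`. Subtracting the two congruences gives `f² ≡ g² + h² (mod m)`, i.e.
`(f, 0)` and `(g, h)` lie on the same circle, and the half-angle parameter of the rotation between
them is `a = h / (f + g)`. The division makes sense modulo `m` because `f + g` takes the value
`2 f(c) ≠ 0` at `c`, hence is coprime to `m`. The required congruences then follow
after clearing the denominator `f + g`. The local parameters are glued by the Chinese Remainder
Theorem, since powers of `X - c_i` for distinct `c_i` are pairwise coprime.
-/

/-- If `f² ≡ g² + h²` modulo `m` and `f + g` is coprime to `m`, then any `a` with
`(f + g) a ≡ h` is a half-angle parameter rotating `(f, 0)` to `(g, h)`. -/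
lemma rotation_of_half_angle {R : Type*} [CommRing R] {m f g h a : R}
    (hcop : IsCoprime m (f + g)) (hcirc : m ∣ f ^ 2 - g ^ 2 - h ^ 2)
    (ha : m ∣ (f + g) * a - h) :
    m ∣ (1 - a ^ 2) * f - (1 + a ^ 2) * g ∧ m ∣ 2 * a * f - (1 + a ^ 2) * h := by
  obtain ⟨n, hn⟩ := hcirc
  obtain ⟨k, hk⟩ := ha
  constructor
  · refine hcop.dvd_of_dvd_mul_left ⟨n - k * (h + (f + g) * a), ?_⟩
    linear_combination hn - (h + (f + g) * a) * hk
  · refine (hcop.pow_right (n := 2)).dvd_of_dvd_mul_left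
      ⟨h * n + k * (2 * (f + g) * f - 2 * h ^ 2 - ((f + g) * a - h) * h), ?_⟩
    linear_combination h * hn + (2 * (f + g) * f - 2 * h ^ 2 - ((f + g) * a - h) * h) * hk

/-- A polynomial over a field not vanishing at `c` is coprime to every power of `X - c`. -/
lemma isCoprime_X_sub_C_pow_of_eval_ne_zero {K : Type*} [Field K] {c : K} {p : K[X]}
    (hp : p.eval c ≠ 0) (n : ℕ) : IsCoprime ((X - C c) ^ n) p := by
  refine IsCoprime.pow_left ?_
  rw [(irreducible_X_sub_C c).coprime_iff_not_dvd, dvd_iff_isRoot]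
  exact hp

/-- simultaneous version of the rotation lemma. Given pairwise distinct
`c_i ∈ (−1,1)`, positive integers `e_i`, and polynomials `f_i, g_i, h_i` with
`X² + f_i² ≡ 1`, `X² + g_i² + h_i² ≡ 1 (mod (X−c_i)^{e_i})`, `f_i(c_i) = g_i(c_i) ≠ 0`,
there is a single polynomial `a` with `(1−a²)f_i ≡ (1+a²)g_i` and
`2a·f_i ≡ (1+a²)h_i (mod (X−c_i)^{e_i})` for every `i`. -/
theorem exists_simultaneous_rotation_parameter
    (ℓ : ℕ) (c : Fin ℓ → ℝ) (hc : Function.Injective c)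
    (hc' : ∀ i, c i ∈ Set.Ioo (-1 : ℝ) 1)
    (e : Fin ℓ → ℕ) (he : ∀ i, 0 < e i) (f g h : Fin ℓ → ℝ[X])
    (hf : ∀ i, (X - C (c i)) ^ e i ∣ X ^ 2 + f i ^ 2 - 1)
    (hgh : ∀ i, (X - C (c i)) ^ e i ∣ X ^ 2 + g i ^ 2 + h i ^ 2 - 1)
    (hval : ∀ i, (f i).eval (c i) = (g i).eval (c i))
    (hne : ∀ i, (f i).eval (c i) ≠ 0) :
    ∃ a : ℝ[X], ∀ i,
      (X - C (c i)) ^ e i ∣ (1 - a ^ 2) * f i - (1 + a ^ 2) * g i ∧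
      (X - C (c i)) ^ e i ∣ 2 * a * f i - (1 + a ^ 2) * h i := by
  have hcop : ∀ i, IsCoprime ((X - C (c i)) ^ e i) (f i + g i) := fun i => by
    refine isCoprime_X_sub_C_pow_of_eval_ne_zero ?_ _
    rw [eval_add, ← hval i, ← two_mul]
    exact mul_ne_zero two_ne_zero (hne i)
  choose v u huv using hcop
  -- The Bézout coefficient `u i` is an inverse of `f i + g i` modulo `(X - c i) ^ e i`.
  obtain ⟨a, ha⟩ := Ideal.exists_forall_sub_mem_ideal
    (I := fun i => Ideal.span {(X - C (c i)) ^ e i})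
    (fun i j hij => (Ideal.isCoprime_span_singleton_iff _ _).2
      (pairwise_coprime_X_sub_C hc hij).pow)
    (fun i => u i * h i)
  refine ⟨a, fun i => rotation_of_half_angle ⟨v i, u i, huv i⟩ ?_ ?_⟩
  · convert dvd_sub (hf i) (hgh i) using 1
    ring
  · obtain ⟨k, hk⟩ := Ideal.mem_span_singleton.1 (ha i)
    exact ⟨(f i + g i) * k - v i * h i, by
      linear_combination (f i + g i) * hk + h i * huv i⟩
end

section
/- Let n be a natural number, and let (P₁, …, P_n) and (Q₁, …, Q_n) be two n-tuples of pairwise distinct points of the real algebraic torus T = {(x₁,x₂,x₃,x₄) ∈ ℝ⁴ : x₁²+x₂² = 1, x₃²+x₄² = 1}. Then there exists an algebraic automorphism φ of T such that φ(P_i) = Q_i for every i = 1, …, n. -/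
/-! The torus is `S¹ × S¹`, and a regular map `g : S¹ → S¹` gives the automorphism
`(z, w) ↦ (z, g z * w)`, a *shear*, with inverse `(z, w) ↦ (z, (g z)⁻¹ * w)`; conjugating by the
swap of the factors gives shears in the other direction.

Regular maps `S¹ → S¹` interpolate arbitrary values at finitely many points
(`exists_regular_interpolation`): for real-valued `t`, the map `((1 + i t) / (1 - i t))²` is
circle-valued, its denominator never vanishes, every point of the circle is of this form, and `t`
may be taken to be the real part of a Lagrange interpolation polynomial in `z`.

Given distinct points `P j = (z j, w j)`, a first shear makes all second coordinates distinct: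
points sharing `z` keep distinct second coordinates, and for different `z` the rotations `g z` can
be chosen so as to avoid the finitely many collisions (`exists_separating`). A shear of the first
coordinate then moves the first coordinates to any prescribed distinct values `a j`, and a third
shear moves the second coordinates to any prescribed `b j` (`exists_move`). Every tuple of
distinct points is thus carried to the same standard tuple, which proves transitivity. -/

/-- The real algebraic torus `S¹ × S¹ ⊆ ℝ⁴`. -/
def torusSet : Set (Fin 4 → ℝ) :=
  {x | x 0 ^ 2 + x 1 ^ 2 = 1 ∧ x 2 ^ 2 + x 3 ^ 2 = 1}

/-- A real-valued function on the torus is regular (algebraic) if it agrees on the torus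
with `p/q` for polynomials `p, q` with `q` nowhere vanishing on the torus. -/
def IsRegularOnTorus (f : torusSet → ℝ) : Prop :=
  ∃ p q : MvPolynomial (Fin 4) ℝ,
    (∀ x : torusSet, MvPolynomial.eval (x : Fin 4 → ℝ) q ≠ 0) ∧
    ∀ x : torusSet, f x =
      MvPolynomial.eval (x : Fin 4 → ℝ) p / MvPolynomial.eval (x : Fin 4 → ℝ) q

namespace TorusAut

open ComplexConjugate

/-! ### Regular functions -/

lemma reg_const (c : ℝ) : IsRegularOnTorus fun _ => c :=
  ⟨MvPolynomial.C c, 1, by simp, by simp⟩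

lemma reg_coord (i : Fin 4) : IsRegularOnTorus fun x => (x : Fin 4 → ℝ) i :=
  ⟨MvPolynomial.X i, 1, by simp, by simp⟩

lemma IsReg.add {f g : torusSet → ℝ} (hf : IsRegularOnTorus f) (hg : IsRegularOnTorus g) :
    IsRegularOnTorus fun x => f x + g x := by
  obtain ⟨p, q, hq, h⟩ := hf
  obtain ⟨p', q', hq', h'⟩ := hg
  refine ⟨p * q' + q * p', q * q', fun x => ?_, fun x => ?_⟩
  · simpa using ⟨hq x, hq' x⟩
  · beta_reduce
    rw [h, h', div_add_div _ _ (hq x) (hq' x)]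
    simp

lemma IsReg.mul {f g : torusSet → ℝ} (hf : IsRegularOnTorus f) (hg : IsRegularOnTorus g) :
    IsRegularOnTorus fun x => f x * g x := by
  obtain ⟨p, q, hq, h⟩ := hf
  obtain ⟨p', q', hq', h'⟩ := hg
  refine ⟨p * p', q * q', fun x => ?_, fun x => ?_⟩
  · simpa using ⟨hq x, hq' x⟩
  · beta_reduce
    rw [h, h', div_mul_div_comm]
    simp

lemma IsReg.inv {f : torusSet → ℝ} (hf : IsRegularOnTorus f) (h0 : ∀ x, f x ≠ 0) :
    IsRegularOnTorus fun x => (f x)⁻¹ := by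
  obtain ⟨p, q, hq, h⟩ := hf
  refine ⟨q, p, fun x hx => h0 x ?_, fun x => ?_⟩
  · rw [h, hx, zero_div]
  · beta_reduce
    rw [h, inv_div]

lemma IsReg.neg {f : torusSet → ℝ} (hf : IsRegularOnTorus f) :
    IsRegularOnTorus fun x => -f x := by
  simpa using IsReg.mul (reg_const (-1)) hf

/-- Polynomial expressions in the coordinates of a regular self-map are regular. -/
lemma IsReg.eval {φ : torusSet → torusSet}
    (hφ : ∀ i, IsRegularOnTorus fun x => (φ x : Fin 4 → ℝ) i) (p : MvPolynomial (Fin 4) ℝ) :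
    IsRegularOnTorus fun x => MvPolynomial.eval (φ x : Fin 4 → ℝ) p := by
  induction p using MvPolynomial.induction_on with
  | C a => simpa using reg_const a
  | add p q hp hq => simpa using IsReg.add hp hq
  | mul_X p i hp => simpa using IsReg.mul hp (hφ i)

lemma IsReg.comp {f : torusSet → ℝ} (hf : IsRegularOnTorus f) {φ : torusSet → torusSet}
    (hφ : ∀ i, IsRegularOnTorus fun x => (φ x : Fin 4 → ℝ) i) :
    IsRegularOnTorus fun x => f (φ x) := by
  obtain ⟨p, q, hq, h⟩ := hf
  simpa only [h, div_eq_mul_inv] using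
    IsReg.mul (IsReg.eval hφ p) (IsReg.inv (IsReg.eval hφ q) fun x => hq (φ x))

/-- The group of algebraic automorphisms of the torus. -/
def autGroup : Subgroup (Equiv.Perm torusSet) where
  carrier := {φ | (∀ i : Fin 4, IsRegularOnTorus fun x => (φ x : Fin 4 → ℝ) i) ∧
    ∀ i : Fin 4, IsRegularOnTorus fun x => (φ.symm x : Fin 4 → ℝ) i}
  one_mem' := ⟨reg_coord, reg_coord⟩
  mul_mem' := fun {_ _} ha hb =>
    ⟨fun i => IsReg.comp (ha.1 i) hb.1, fun i => IsReg.comp (hb.2 i) ha.2⟩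
  inv_mem' := fun {_} ha => ⟨ha.2, ha.1⟩

/-- A complex-valued function on the torus is regular if its real and imaginary parts are. -/
def CReg (f : torusSet → ℂ) : Prop :=
  IsRegularOnTorus (fun x => (f x).re) ∧ IsRegularOnTorus fun x => (f x).im

lemma creg_const (c : ℂ) : CReg fun _ => c := ⟨reg_const _, reg_const _⟩

lemma CReg.add {f g : torusSet → ℂ} (hf : CReg f) (hg : CReg g) : CReg fun x => f x + g x :=
  ⟨by simpa using IsReg.add hf.1 hg.1, by simpa using IsReg.add hf.2 hg.2⟩

lemma CReg.mul {f g : torusSet → ℂ} (hf : CReg f) (hg : CReg g) : CReg fun x => f x * g x :=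
  ⟨by simpa [sub_eq_add_neg] using IsReg.add (IsReg.mul hf.1 hg.1) (IsReg.neg (IsReg.mul hf.2 hg.2)),
   by simpa using IsReg.add (IsReg.mul hf.1 hg.2) (IsReg.mul hf.2 hg.1)⟩

lemma CReg.conj {f : torusSet → ℂ} (hf : CReg f) : CReg fun x => conj (f x) :=
  ⟨by simpa using hf.1, by simpa using IsReg.neg hf.2⟩

lemma CReg.inv {f : torusSet → ℂ} (hf : CReg f) (h0 : ∀ x, f x ≠ 0) : CReg fun x => (f x)⁻¹ := by
  have hn : IsRegularOnTorus fun x => (Complex.normSq (f x))⁻¹ := by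
    refine IsReg.inv ?_ fun x => by simpa using h0 x
    simpa only [Complex.normSq_apply] using IsReg.add (IsReg.mul hf.1 hf.1) (IsReg.mul hf.2 hf.2)
  exact ⟨by simpa [div_eq_mul_inv] using IsReg.mul hf.1 hn,
    by simpa [div_eq_mul_inv] using IsReg.mul (IsReg.neg hf.2) hn⟩

lemma CReg.ofReal_re {f : torusSet → ℂ} (hf : CReg f) : CReg fun x => ((f x).re : ℂ) :=
  ⟨by simpa using hf.1, by simpa using reg_const 0⟩

lemma CReg.polynomial_eval {f : torusSet → ℂ} (hf : CReg f) (p : Polynomial ℂ) :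
    CReg fun x => p.eval (f x) := by
  induction p using Polynomial.induction_on with
  | C a => simpa using creg_const a
  | add p q hp hq => simpa using CReg.add hp hq
  | monomial n a h => simpa [pow_succ, mul_assoc] using CReg.mul h hf

/-! ### The two circle factors, shears and the swap -/

/-- The first circle coordinate `x 0 + i x 1` of a point of the torus. -/
def fst (x : torusSet) : Circle :=
  ⟨⟨(x : Fin 4 → ℝ) 0, (x : Fin 4 → ℝ) 1⟩, by
    refine mem_sphere_zero_iff_norm.2 ?_
    rw [← sq_eq_sq₀ (norm_nonneg _) zero_le_one, Complex.sq_norm,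
      Complex.normSq_apply]
    linarith [x.2.1]⟩

/-- The second circle coordinate `x 2 + i x 3` of a point of the torus. -/
def snd (x : torusSet) : Circle :=
  ⟨⟨(x : Fin 4 → ℝ) 2, (x : Fin 4 → ℝ) 3⟩, by
    refine mem_sphere_zero_iff_norm.2 ?_
    rw [← sq_eq_sq₀ (norm_nonneg _) zero_le_one, Complex.sq_norm,
      Complex.normSq_apply]
    linarith [x.2.2]⟩

/-- The point of the torus with given circle coordinates. -/
def mk (z w : Circle) : torusSet :=
  ⟨![(z : ℂ).re, (z : ℂ).im, (w : ℂ).re, (w : ℂ).im], by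
    have hz := Circle.normSq_coe z
    have hw := Circle.normSq_coe w
    rw [Complex.normSq_apply] at hz hw
    constructor <;> simp <;> linarith⟩

@[simp] lemma fst_mk (z w : Circle) : fst (mk z w) = z := rfl

@[simp] lemma snd_mk (z w : Circle) : snd (mk z w) = w := rfl

@[simp] lemma mk_fst_snd (x : torusSet) : mk (fst x) (snd x) = x := by
  apply Subtype.ext
  funext i
  fin_cases i <;> rfl

lemma creg_fst : CReg fun x => (fst x : ℂ) := ⟨reg_coord 0, reg_coord 1⟩

lemma creg_snd : CReg fun x => (snd x : ℂ) := ⟨reg_coord 2, reg_coord 3⟩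

lemma reg_mk {f g : torusSet → Circle} (hf : CReg fun x => (f x : ℂ))
    (hg : CReg fun x => (g x : ℂ)) (i : Fin 4) :
    IsRegularOnTorus fun x => (mk (f x) (g x) : Fin 4 → ℝ) i := by
  fin_cases i
  exacts [hf.1, hf.2, hg.1, hg.2]

/-- The shear `(z, w) ↦ (z, g z * w)`. -/
noncomputable def shear (g : Circle → Circle) : Equiv.Perm torusSet where
  toFun x := mk (fst x) (g (fst x) * snd x)
  invFun x := mk (fst x) ((g (fst x))⁻¹ * snd x)
  left_inv x := by simp
  right_inv x := by simp

lemma shear_mem {g : Circle → Circle} (hg : CReg fun x => (g (fst x) : ℂ)) :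
    shear g ∈ autGroup := by
  refine ⟨reg_mk creg_fst ?_, reg_mk creg_fst ?_⟩
  · simpa using CReg.mul hg creg_snd
  · simpa only [Circle.coe_mul, Circle.coe_inv_eq_conj] using CReg.mul hg.conj creg_snd

/-- The exchange of the two circle factors. -/
def swap : Equiv.Perm torusSet where
  toFun x := mk (snd x) (fst x)
  invFun x := mk (snd x) (fst x)
  left_inv x := by simp
  right_inv x := by simp

lemma swap_mem : swap ∈ autGroup := ⟨reg_mk creg_snd creg_fst, reg_mk creg_snd creg_fst⟩

@[simp] lemma swap_mk (z w : Circle) : swap (mk z w) = mk w z := rfl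

/-! ### Interpolation by regular maps of the circle -/

lemma one_sub_ne (t : ℝ) : (1 - t * Complex.I : ℂ) ≠ 0 := by
  intro h
  simpa using congrArg Complex.re h

/-- Squaring the rational parametrization of the circle makes it surjective: a point has two
square roots, at least one of which differs from the missed point `-1`. -/
lemma exists_param (u : Circle) :
    ∃ t : ℝ, (conj (1 - t * Complex.I) / (1 - t * Complex.I)) ^ 2 = (u : ℂ) := by
  obtain ⟨v, hv⟩ : ∃ v : Circle, v ^ 2 = u := by
    refine ⟨Circle.exp (Complex.arg u / 2), ?_⟩
    rw [sq, ← Circle.exp_add, add_halves, Circle.exp_arg]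
  obtain ⟨v, hv, hre⟩ : ∃ v : Circle, v ^ 2 = u ∧ 0 < 1 + (v : ℂ).re := by
    rcases le_total 0 (v : ℂ).re with h | h
    · exact ⟨v, hv, by linarith⟩
    · exact ⟨-v, by rw [neg_sq, hv], by rw [Circle.coe_neg, Complex.neg_re]; linarith⟩
  have hn := Circle.normSq_coe v
  rw [Complex.normSq_apply] at hn
  -- `t` is the slope of the line joining `-1` to `v`
  refine ⟨(v : ℂ).im / (1 + (v : ℂ).re), ?_⟩
  generalize hs : (v : ℂ).im / (1 + (v : ℂ).re) = t
  rw [div_eq_iff hre.ne'] at hs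
  rw [← hv, Circle.coe_pow]
  congr 1
  rw [div_eq_iff (one_sub_ne _)]
  apply Complex.ext
  · have h : (v : ℂ).re + (v : ℂ).im * t = 1 := by
      refine mul_left_cancel₀ hre.ne' ?_
      linear_combination hn - (v : ℂ).im * hs
    simpa using h.symm
  · simp
    linarith

/-- Regular maps of the circle interpolate any values `c` at finitely many points: apply the
parametrization of `exists_param` to the real part of a complex Lagrange polynomial whose values
at the nodes are the (real) parameters of the prescribed points. -/
lemma exists_regular_interpolation (s : Finset Circle) (c : Circle → Circle) :
    ∃ g : Circle → Circle, CReg (fun x => (g (fst x) : ℂ)) ∧ ∀ z ∈ s, g z = c z := by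
  classical
  choose t ht using exists_param
  let p : Polynomial ℂ := Lagrange.interpolate s (fun z : Circle => (z : ℂ)) fun z => (t (c z) : ℂ)
  let F : Circle → ℂ := fun z => 1 - ((p.eval (z : ℂ)).re : ℂ) * Complex.I
  have hF (z) : F z ≠ 0 := one_sub_ne _
  have hco (z) : (Circle.ofConjDivSelf (F z) (hF z) : ℂ) = conj (F z) / F z := rfl
  have hFr : CReg fun x => F (fst x) := by
    simpa [F, sub_eq_add_neg] using CReg.add (creg_const 1)
      (CReg.mul (CReg.ofReal_re (creg_fst.polynomial_eval p)) (creg_const (-Complex.I)))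
  refine ⟨fun z => Circle.ofConjDivSelf (F z) (hF z) ^ 2, ?_, fun z hz => ?_⟩
  · have h := CReg.mul hFr.conj (hFr.inv fun x => hF _)
    simp only [Circle.coe_pow, hco]
    simpa only [sq, div_eq_mul_inv] using CReg.mul h h
  · have h : p.eval (z : ℂ) = t (c z) :=
      Lagrange.eval_interpolate_at_node (fun z => (t (c z) : ℂ)) Circle.coe_injective.injOn hz
    apply Circle.ext
    rw [← ht (c z), Circle.coe_pow, hco]
    simp only [F, h, Complex.ofReal_re]

/-- Finitely many circles `{z} × S¹` can be rotated independently by an automorphism. -/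
lemma exists_shear (s : Finset Circle) (c : Circle → Circle) :
    ∃ φ ∈ autGroup, ∀ z ∈ s, ∀ w, φ (mk z w) = mk z (c z * w) := by
  obtain ⟨g, hg, h⟩ := exists_regular_interpolation s c
  exact ⟨shear g, shear_mem hg, fun z hz w => by simp [shear, h z hz]⟩

/-- If the first coordinates are distinct, the second coordinates can be moved arbitrarily. -/
lemma exists_move_snd {n : ℕ} (z w b : Fin n → Circle) (hz : Function.Injective z) :
    ∃ φ ∈ autGroup, ∀ j, φ (mk (z j) (w j)) = mk (z j) (b j) := by
  classical
  obtain ⟨φ, hφ, h⟩ := exists_shear (Finset.univ.image z)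
    (Function.extend z (fun j => b j * (w j)⁻¹) 1)
  refine ⟨φ, hφ, fun j => ?_⟩
  rw [h _ (by simp), hz.extend_apply]
  simp

/-! ### Transitivity -/

instance : Infinite Circle :=
  Set.infinite_univ_iff.1 <| (Set.Infinite.image
    (Circle.exp_injOn_Icc (a := 0) (b := 1) (by linarith [Real.pi_gt_three]))
    (Set.Icc_infinite zero_lt_one)).mono (Set.subset_univ _)

/-- Rotations indexed by a finite set whose mutual quotients avoid a given finite set. -/
lemma exists_separating (s S : Finset Circle) :
    ∃ c : Circle → Circle, ∀ z ∈ s, ∀ z' ∈ s, z ≠ z' → c z / c z' ∉ S := by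
  classical
  induction s using Finset.induction_on with
  | empty => exact ⟨1, by simp⟩
  | insert a s ha ih =>
    obtain ⟨c, hc⟩ := ih
    -- the new value must avoid `S * c z` and `c z / S` for the old points `z`
    obtain ⟨v, hv⟩ := Infinite.exists_notMem_finset
      (Finset.image₂ (fun r z => r * c z) S s ∪ Finset.image₂ (fun r z => c z / r) S s)
    simp only [Finset.mem_union, Finset.mem_image₂, not_or, not_exists, not_and] at hv
    obtain ⟨hv₁, hv₂⟩ := hv
    have hne {z} (hz : z ∈ s) : z ≠ a := fun h => ha (h ▸ hz)
    refine ⟨Function.update c a v, fun z hz z' hz' hzz' hS => ?_⟩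
    rcases Finset.mem_insert.1 hz with rfl | hzs <;> rcases Finset.mem_insert.1 hz' with rfl | hzs'
    · exact hzz' rfl
    · rw [Function.update_self, Function.update_of_ne (hne hzs')] at hS
      exact hv₁ _ hS z' hzs' (by simp)
    · rw [Function.update_self, Function.update_of_ne (hne hzs)] at hS
      exact hv₂ _ hS z hzs (by simp)
    · rw [Function.update_of_ne (hne hzs), Function.update_of_ne (hne hzs')] at hS
      exact hc z hzs z' hzs' hzz' hS

/-- Any tuple of distinct points can be moved to any tuple with distinct first coordinates:
separate the second coordinates, then adjust the first ones, then the second ones. -/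
lemma exists_move {n : ℕ} (P : Fin n → torusSet) (hP : Function.Injective P)
    (a b : Fin n → Circle) (ha : Function.Injective a) :
    ∃ φ ∈ autGroup, ∀ j, φ (P j) = mk (a j) (b j) := by
  classical
  let s : Finset Circle := Finset.univ.image fun j => fst (P j)
  have hs (j) : fst (P j) ∈ s := by simp [s]
  obtain ⟨c, hc⟩ := exists_separating s
    (Finset.univ.image fun ij : Fin n × Fin n => snd (P ij.2) / snd (P ij.1))
  obtain ⟨φ₁, hφ₁, h₁⟩ := exists_shear s c
  let w : Fin n → Circle := fun j => c (fst (P j)) * snd (P j)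
  have hw : Function.Injective w := by
    intro i j hij
    apply hP
    by_cases h : fst (P i) = fst (P j)
    · have h' : snd (P i) = snd (P j) := by simpa [w, h] using hij
      rw [← mk_fst_snd (P i), ← mk_fst_snd (P j), h, h']
    · refine absurd (Finset.mem_image.2 ⟨(i, j), Finset.mem_univ _, ?_⟩) (hc _ (hs i) _ (hs j) h)
      rw [div_eq_div_iff_mul_eq_mul]
      simpa [w, mul_comm] using hij.symm
  obtain ⟨φ₂, hφ₂, h₂⟩ := exists_move_snd w (fun j => fst (P j)) a hw
  obtain ⟨φ₃, hφ₃, h₃⟩ := exists_move_snd a w b ha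
  refine ⟨φ₃ * (swap * φ₂ * swap) * φ₁, mul_mem (mul_mem hφ₃ (mul_mem (mul_mem swap_mem hφ₂)
    swap_mem)) hφ₁, fun j => ?_⟩
  have h := h₁ _ (hs j) (snd (P j))
  rw [mk_fst_snd] at h
  simp only [Equiv.Perm.mul_apply, h, swap_mk]
  rw [h₂ j, swap_mk, h₃ j]

end TorusAut

open TorusAut in
/-- the group of algebraic automorphisms of the real algebraic torus acts
`n`-transitively: any `n`-tuple of pairwise distinct points can be carried to any other
by a bijection of the torus whose coordinate functions, and those of its inverse, are
regular. -/
theorem torus_aut_n_transitive (n : ℕ) (P Q : Fin n → torusSet)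
    (hP : Function.Injective P) (hQ : Function.Injective Q) :
    ∃ φ : torusSet ≃ torusSet,
      (∀ i : Fin 4, IsRegularOnTorus fun x => (φ x : Fin 4 → ℝ) i) ∧
      (∀ i : Fin 4, IsRegularOnTorus fun x => (φ.symm x : Fin 4 → ℝ) i) ∧
      ∀ j, φ (P j) = Q j := by
  let a : Fin n → Circle := fun j => Infinite.natEmbedding Circle j
  have ha : Function.Injective a := (Infinite.natEmbedding Circle).injective.comp Fin.val_injective
  obtain ⟨φ, hφ, h⟩ := exists_move P hP a a ha
  obtain ⟨ψ, hψ, h'⟩ := exists_move Q hQ a a ha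
  obtain ⟨h₁, h₂⟩ := autGroup.mul_mem (autGroup.inv_mem hψ) hφ
  refine ⟨ψ⁻¹ * φ, h₁, h₂, fun j => ?_⟩
  rw [Equiv.Perm.mul_apply, h, ← h']
  exact ψ.symm_apply_apply _
end

section
/- Let n be a natural number, and let (P₁, …, P_n) and (Q₁, …, Q_n) be two n-tuples of pairwise distinct points of the unit sphere S² = {(x,y,z) ∈ ℝ³ : x²+y²+z² = 1}. Then there exists an algebraic automorphism φ of S² such that φ(P_i) = Q_i for every i = 1, …, n. -/
/-!
It suffices to move a point `A` of the sphere to a point `B` by an algebraic automorphism that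
fixes a given finite set `F` of points different from `A` and `B`; the theorem follows by
treating the points one at a time (`IsAlgAut.trans`, `exists_move`).

If `A ≠ B`, the planes through the line `AB` form a one-parameter family. A line meets the sphere
in at most two points, so each point of `F` lies on exactly one of these planes, and some plane
`{v | u ⬝ v = u ⬝ A}` of the family misses `F` (`cross_ne_zero`, `exists_dot_ne_zero`). The
automorphism is a twist about the axis `u`: the point `v` is rotated about `u` by an angle that
depends only on the height `z = u ⬝ v`. Heights are preserved, so the inverse is the twist by the
opposite angles. The rotation is conjugation by the quaternion `c z + s z • u`, a rational
expression in `v` whose denominator is `c z ^ 2 + s z ^ 2 * |u| ^ 2`. Let `h` be a polynomial equal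
to `1` at the height of `A` and to `0` at the heights of the points of `F`. With
`s = h` and `c = 1 - h + c₀ h`, the functions `c` and `s` have no common zero, the points of `F` are
fixed, and `A` is rotated by `c₀ + u`, which takes `A` to `B` for a suitable `c₀`.
-/

/-- The unit sphere `S² ⊆ ℝ³`. -/
def sphereSet : Set (Fin 3 → ℝ) :=
  {x | x 0 ^ 2 + x 1 ^ 2 + x 2 ^ 2 = 1}

/-- A real-valued function on the sphere is regular (algebraic) if it agrees on the
sphere with `p/q` for polynomials `p, q` with `q` nowhere vanishing on the sphere. -/
def IsRegularOnSphere (f : sphereSet → ℝ) : Prop :=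
  ∃ p q : MvPolynomial (Fin 3) ℝ,
    (∀ x : sphereSet, MvPolynomial.eval (x : Fin 3 → ℝ) q ≠ 0) ∧
    ∀ x : sphereSet, f x =
      MvPolynomial.eval (x : Fin 3 → ℝ) p / MvPolynomial.eval (x : Fin 3 → ℝ) q

/-! ### Regular functions -/

namespace IsRegularOnSphere

theorem const (a : ℝ) : IsRegularOnSphere fun _ => a :=
  ⟨MvPolynomial.C a, 1, by simp, by simp⟩

theorem coord (i : Fin 3) : IsRegularOnSphere fun x => (x : Fin 3 → ℝ) i :=
  ⟨MvPolynomial.X i, 1, by simp, by simp⟩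

theorem add {f g : sphereSet → ℝ} (hf : IsRegularOnSphere f) (hg : IsRegularOnSphere g) :
    IsRegularOnSphere fun x => f x + g x := by
  obtain ⟨p, q, hq, h⟩ := hf
  obtain ⟨p', q', hq', h'⟩ := hg
  refine ⟨p * q' + q * p', q * q', fun x => ?_, fun x => ?_⟩
  · simpa using ⟨hq x, hq' x⟩
  · simp only [h, h', map_add, map_mul]
    exact div_add_div _ _ (hq x) (hq' x)

theorem mul {f g : sphereSet → ℝ} (hf : IsRegularOnSphere f) (hg : IsRegularOnSphere g) :
    IsRegularOnSphere fun x => f x * g x := by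
  obtain ⟨p, q, hq, h⟩ := hf
  obtain ⟨p', q', hq', h'⟩ := hg
  refine ⟨p * p', q * q', fun x => ?_, fun x => ?_⟩
  · simpa using ⟨hq x, hq' x⟩
  · simp only [h, h', map_mul]
    exact div_mul_div_comm _ _ _ _

theorem div {f g : sphereSet → ℝ} (hf : IsRegularOnSphere f) (hg : IsRegularOnSphere g)
    (h0 : ∀ x, g x ≠ 0) : IsRegularOnSphere fun x => f x / g x := by
  obtain ⟨p, q, hq, h⟩ := hf
  obtain ⟨p', q', hq', h'⟩ := hg
  refine ⟨p * q', q * p', fun x => ?_, fun x => ?_⟩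
  · have h1 := h0 x
    rw [h', div_ne_zero_iff] at h1
    simpa using ⟨hq x, h1.1⟩
  · simp only [h, h', map_mul]
    exact div_div_div_eq _ _ _ _

theorem neg {f : sphereSet → ℝ} (hf : IsRegularOnSphere f) :
    IsRegularOnSphere fun x => -f x := by
  simpa using (const (-1)).mul hf

theorem sub {f g : sphereSet → ℝ} (hf : IsRegularOnSphere f) (hg : IsRegularOnSphere g) :
    IsRegularOnSphere fun x => f x - g x := by
  simpa [sub_eq_add_neg] using hf.add hg.neg

theorem pow_two {f : sphereSet → ℝ} (hf : IsRegularOnSphere f) :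
    IsRegularOnSphere fun x => f x ^ 2 := by
  simpa [sq] using hf.mul hf

theorem prod {ι : Type*} (t : Finset ι) {f : ι → sphereSet → ℝ}
    (hf : ∀ i, IsRegularOnSphere (f i)) : IsRegularOnSphere fun x => ∏ i ∈ t, f i x := by
  classical
  induction t using Finset.induction_on with
  | empty => simpa using const 1
  | insert a t ha ih => simpa [Finset.prod_insert ha] using (hf a).mul ih

theorem eval (p : MvPolynomial (Fin 3) ℝ) {φ : sphereSet → sphereSet}
    (hφ : ∀ i : Fin 3, IsRegularOnSphere fun x => (φ x : Fin 3 → ℝ) i) :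
    IsRegularOnSphere fun x => MvPolynomial.eval (φ x : Fin 3 → ℝ) p := by
  induction p using MvPolynomial.induction_on with
  | C a => simpa using const a
  | add p q hp hq => simpa using hp.add hq
  | mul_X p i hp => simpa using hp.mul (hφ i)

theorem comp {f : sphereSet → ℝ} (hf : IsRegularOnSphere f) {φ : sphereSet → sphereSet}
    (hφ : ∀ i : Fin 3, IsRegularOnSphere fun x => (φ x : Fin 3 → ℝ) i) :
    IsRegularOnSphere fun x => f (φ x) := by
  obtain ⟨p, q, hq, h⟩ := hf
  simpa only [h] using (eval p hφ).div (eval q hφ) fun x => hq (φ x)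

end IsRegularOnSphere

/-! ### Algebraic automorphisms -/

/-- A bijection of the sphere which is, together with its inverse, regular in each coordinate. -/
def IsAlgAut (φ : sphereSet ≃ sphereSet) : Prop :=
  (∀ i : Fin 3, IsRegularOnSphere fun x => (φ x : Fin 3 → ℝ) i) ∧
    ∀ i : Fin 3, IsRegularOnSphere fun x => (φ.symm x : Fin 3 → ℝ) i

theorem IsAlgAut.refl : IsAlgAut (Equiv.refl _) :=
  ⟨IsRegularOnSphere.coord, IsRegularOnSphere.coord⟩

theorem IsAlgAut.trans {φ ψ : sphereSet ≃ sphereSet} (hφ : IsAlgAut φ) (hψ : IsAlgAut ψ) :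
    IsAlgAut (φ.trans ψ) :=
  ⟨fun i => (hψ.1 i).comp hφ.1, fun i => (hφ.2 i).comp hψ.2⟩

/-! ### Rotations and twists -/

/-- The dot product on `ℝ³`, written out in coordinates. -/
def dot3 (u v : Fin 3 → ℝ) : ℝ := u 0 * v 0 + u 1 * v 1 + u 2 * v 2

/-- The rotation of `v` about the axis `u` given by conjugation by the quaternion `c + s • u`:
`((c² - s²|u|²) v + 2 s² (u ⬝ v) u + 2 c s (u × v)) / (c² + s²|u|²)`. The axis `u` need not be a
unit vector; the expression is meaningful only if the denominator is nonzero. -/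
noncomputable def rot (c s : ℝ) (u v : Fin 3 → ℝ) : Fin 3 → ℝ := fun i =>
  ((c ^ 2 - s ^ 2 * dot3 u u) * v i + 2 * s ^ 2 * dot3 u v * u i
    + 2 * (c * s) * (u (i + 1) * v (i + 2) - u (i + 2) * v (i + 1))) / (c ^ 2 + s ^ 2 * dot3 u u)

theorem dot3_rot {c s : ℝ} {u : Fin 3 → ℝ} (h : c ^ 2 + s ^ 2 * dot3 u u ≠ 0) (v : Fin 3 → ℝ) :
    dot3 u (rot c s u v) = dot3 u v := by
  have e : (1 : Fin 3) + 2 = 0 := rfl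
  have e' : (2 : Fin 3) + 1 = 0 := rfl
  have e'' : (2 : Fin 3) + 2 = 1 := rfl
  have e3 : (1 : Fin 3) + 1 = 2 := rfl
  simp only [dot3, rot, zero_add, e, e', e'', e3] at h ⊢
  generalize hd : c ^ 2 + s ^ 2 * (u 0 * u 0 + u 1 * u 1 + u 2 * u 2) = d at h ⊢
  field_simp
  rw [← hd]
  ring

theorem rot_mem {c s : ℝ} {u : Fin 3 → ℝ} (h : c ^ 2 + s ^ 2 * dot3 u u ≠ 0) {v : Fin 3 → ℝ}
    (hv : v ∈ sphereSet) : rot c s u v ∈ sphereSet := by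
  have e : (1 : Fin 3) + 2 = 0 := rfl
  have e' : (2 : Fin 3) + 1 = 0 := rfl
  have e'' : (2 : Fin 3) + 2 = 1 := rfl
  have e3 : (1 : Fin 3) + 1 = 2 := rfl
  have key : rot c s u v 0 ^ 2 + rot c s u v 1 ^ 2 + rot c s u v 2 ^ 2
      = v 0 ^ 2 + v 1 ^ 2 + v 2 ^ 2 := by
    simp only [dot3, rot, zero_add, e, e', e'', e3] at h ⊢
    generalize hd : c ^ 2 + s ^ 2 * (u 0 * u 0 + u 1 * u 1 + u 2 * u 2) = d at h ⊢
    field_simp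
    rw [← hd]
    ring
  exact key.trans hv

theorem rot_neg_rot {c s : ℝ} {u : Fin 3 → ℝ} (h : c ^ 2 + s ^ 2 * dot3 u u ≠ 0)
    (v : Fin 3 → ℝ) : rot c (-s) u (rot c s u v) = v := by
  have e : (1 : Fin 3) + 2 = 0 := rfl
  have e' : (2 : Fin 3) + 1 = 0 := rfl
  have e'' : (2 : Fin 3) + 2 = 1 := rfl
  have e3 : (1 : Fin 3) + 1 = 2 := rfl
  funext i
  rw [rot, dot3_rot h, neg_sq]
  fin_cases i <;>
  · simp only [dot3, rot, zero_add, e, e', e'', e3, Fin.isValue, Fin.zero_eta, Fin.mk_one,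
      Fin.reduceFinMk] at h ⊢
    generalize hd : c ^ 2 + s ^ 2 * (u 0 * u 0 + u 1 * u 1 + u 2 * u 2) = d at h ⊢
    field_simp
    rw [← hd]
    ring

/-- The twist about the axis `u`: a point of height `z = u ⬝ v` is rotated about `u` by the
quaternion `c z + s z • u`. -/
noncomputable def twist (u : Fin 3 → ℝ) (c s : ℝ → ℝ)
    (h : ∀ z, c z ^ 2 + s z ^ 2 * dot3 u u ≠ 0) : sphereSet ≃ sphereSet where
  toFun x := ⟨rot (c (dot3 u x)) (s (dot3 u x)) u x, rot_mem (h _) x.2⟩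
  invFun x := ⟨rot (c (dot3 u x)) (-s (dot3 u x)) u x,
    rot_mem (by rw [neg_sq]; exact h _) x.2⟩
  left_inv x := by
    ext1
    simp only [dot3_rot (h _)]
    exact rot_neg_rot (h _) _
  right_inv x := by
    have h' : c (dot3 u x) ^ 2 + (-s (dot3 u x)) ^ 2 * dot3 u u ≠ 0 := by
      rw [neg_sq]; exact h _
    ext1
    simp only [dot3_rot h']
    simpa using rot_neg_rot h' (x : Fin 3 → ℝ)

theorem isRegularOnSphere_dot3 (u : Fin 3 → ℝ) :
    IsRegularOnSphere fun x => dot3 u x :=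
  (((IsRegularOnSphere.const _).mul (.coord 0)).add ((IsRegularOnSphere.const _).mul (.coord 1))).add
    ((IsRegularOnSphere.const _).mul (.coord 2))

theorem isRegularOnSphere_rot {u : Fin 3 → ℝ} {c s : sphereSet → ℝ}
    (hc : IsRegularOnSphere c) (hs : IsRegularOnSphere s)
    (h : ∀ x, c x ^ 2 + s x ^ 2 * dot3 u u ≠ 0) (i : Fin 3) :
    IsRegularOnSphere fun x => rot (c x) (s x) u x i := by
  have k := IsRegularOnSphere.const
  have X := IsRegularOnSphere.coord
  refine IsRegularOnSphere.div ?_ (hc.pow_two.add (hs.pow_two.mul (k _))) h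
  exact (((hc.pow_two.sub (hs.pow_two.mul (k _))).mul (X i)).add
    ((((k 2).mul hs.pow_two).mul (isRegularOnSphere_dot3 u)).mul (k _))).add
    (((k 2).mul (hc.mul hs)).mul (((k _).mul (X _)).sub ((k _).mul (X _))))

theorem isAlgAut_twist {u : Fin 3 → ℝ} {c s : ℝ → ℝ}
    (h : ∀ z, c z ^ 2 + s z ^ 2 * dot3 u u ≠ 0)
    (hc : IsRegularOnSphere fun x => c (dot3 u x))
    (hs : IsRegularOnSphere fun x => s (dot3 u x)) : IsAlgAut (twist u c s h) :=
  ⟨isRegularOnSphere_rot hc hs fun _ => h _,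
    isRegularOnSphere_rot hc hs.neg fun _ => by rw [neg_sq]; exact h _⟩

/-! ### Choice of the axis -/

/-- The cross product on `ℝ³`, with indices taken modulo 3. -/
def cross3 (u v : Fin 3 → ℝ) : Fin 3 → ℝ := fun i =>
  u (i + 1) * v (i + 2) - u (i + 2) * v (i + 1)

theorem cross3_eq (u v : Fin 3 → ℝ) : cross3 u v =
    ![u 1 * v 2 - u 2 * v 1, u 2 * v 0 - u 0 * v 2, u 0 * v 1 - u 1 * v 0] := by
  funext i
  fin_cases i <;> rfl

theorem dot3_self_nonneg (u : Fin 3 → ℝ) : 0 ≤ dot3 u u := by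
  unfold dot3
  nlinarith [mul_self_nonneg (u 0), mul_self_nonneg (u 1), mul_self_nonneg (u 2)]

theorem dot3_self_ne_zero {D : Fin 3 → ℝ} (hD : D ≠ 0) : dot3 D D ≠ 0 := by
  intro h
  apply hD
  unfold dot3 at h
  funext i
  fin_cases i <;> simp <;> nlinarith

/-- Three distinct points of the sphere are not collinear. -/
theorem cross_ne_zero {A B C : Fin 3 → ℝ} (hA : A ∈ sphereSet) (hB : B ∈ sphereSet)
    (hC : C ∈ sphereSet) (hAB : A ≠ B) (hCA : C ≠ A) (hCB : C ≠ B) :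
    cross3 (C - A) (A - B) ≠ 0 := by
  intro h0
  have hA' : A 0 ^ 2 + A 1 ^ 2 + A 2 ^ 2 = 1 := hA
  have hB' : B 0 ^ 2 + B 1 ^ 2 + B 2 ^ 2 = 1 := hB
  have hC' : C 0 ^ 2 + C 1 ^ 2 + C 2 ^ 2 = 1 := hC
  have hD := dot3_self_ne_zero (sub_ne_zero.2 hAB)
  have x0 := congrFun h0 0
  have x1 := congrFun h0 1
  have x2 := congrFun h0 2
  simp [cross3_eq] at x0 x1 x2
  simp [dot3] at hD
  -- `C - A = k (A - B)`; as `A`, `B`, `C` have norm one, `k = 0` or `k = -1`.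
  obtain ⟨k, hk⟩ : ∃ k, ∀ i, C i - A i = k * (A i - B i) := by
    refine ⟨((C 0 - A 0) * (A 0 - B 0) + (C 1 - A 1) * (A 1 - B 1) + (C 2 - A 2) * (A 2 - B 2)) /
      ((A 0 - B 0) * (A 0 - B 0) + (A 1 - B 1) * (A 1 - B 1) + (A 2 - B 2) * (A 2 - B 2)), ?_⟩
    intro i
    rw [div_mul_eq_mul_div, eq_div_iff hD]
    fin_cases i <;> simp only [Fin.isValue, Fin.zero_eta, Fin.mk_one, Fin.reduceFinMk]
    · linear_combination (A 1 - B 1) * x2 - (A 2 - B 2) * x1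
    · linear_combination (A 2 - B 2) * x0 - (A 0 - B 0) * x2
    · linear_combination (A 0 - B 0) * x1 - (A 1 - B 1) * x0
  have hC0 : C 0 = A 0 + k * (A 0 - B 0) := by linear_combination hk 0
  have hC1 : C 1 = A 1 + k * (A 1 - B 1) := by linear_combination hk 1
  have hC2 : C 2 = A 2 + k * (A 2 - B 2) := by linear_combination hk 2
  rw [hC0, hC1, hC2] at hC'
  have hkk : k * (k + 1) = 0 := by
    refine (mul_eq_zero.1 (?_ : _ * (k * (k + 1)) = 0)).resolve_left hD
    linear_combination hC' - (k + 1) * hA' + k * hB'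
  rcases mul_eq_zero.1 hkk with h | h
  · exact hCA (funext fun i => by linear_combination hk i + (A i - B i) * h)
  · exact hCB (funext fun i => by linear_combination hk i + (A i - B i) * h)

/-- Finitely many nonzero vectors have nonzero dot product with a common vector. -/
theorem exists_dot_ne_zero (t : Finset (Fin 3 → ℝ)) (ht : ∀ g ∈ t, g ≠ 0) :
    ∃ w, ∀ g ∈ t, dot3 w g ≠ 0 := by
  classical
  -- The vector is sought on the moment curve `r ↦ (1, r, r²)`.
  let p : (Fin 3 → ℝ) → Polynomial ℝ := fun g =>
    Polynomial.C (g 0) + Polynomial.C (g 1) * Polynomial.X +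
      Polynomial.C (g 2) * Polynomial.X ^ 2
  have hp : ∏ g ∈ t, p g ≠ 0 := by
    refine Finset.prod_ne_zero_iff.2 fun g hg h => ht g hg ?_
    have h0 := congrArg (fun q => Polynomial.coeff q 0) h
    have h1 := congrArg (fun q => Polynomial.coeff q 1) h
    have h2 := congrArg (fun q => Polynomial.coeff q 2) h
    simp [p, Polynomial.coeff_X, Polynomial.coeff_X_pow, Polynomial.coeff_C] at h0 h1 h2
    funext i
    fin_cases i <;> simp [h0, h1, h2]
  obtain ⟨r, hr⟩ : ∃ r, (∏ g ∈ t, p g).eval r ≠ 0 := by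
    by_contra! h
    exact hp (Polynomial.funext fun r => by simpa using h r)
  rw [Polynomial.eval_prod, Finset.prod_ne_zero_iff] at hr
  refine ⟨![1, r, r ^ 2], fun g hg h => hr g hg ?_⟩
  simp [dot3, p] at h ⊢
  linarith

theorem exists_cross_ne_zero {D : Fin 3 → ℝ} (hD : D ≠ 0) : ∃ v, cross3 v D ≠ 0 := by
  by_contra! h
  have h1 := h ![1, 0, 0]
  have h2 := h ![0, 1, 0]
  simp [cross3_eq] at h1 h2
  apply hD
  funext i
  fin_cases i <;> simp [h1, h2]

/-- Some plane through two points of the sphere misses a given finite set of other points. -/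
theorem exists_axis {A B : sphereSet} (hAB : A ≠ B) (F : Finset sphereSet) (hA : A ∉ F)
    (hB : B ∉ F) : ∃ u : Fin 3 → ℝ, dot3 u u ≠ 0 ∧ dot3 u A = dot3 u B ∧
      ∀ C ∈ F, dot3 u A ≠ dot3 u C := by
  classical
  have hD : (A : Fin 3 → ℝ) - B ≠ 0 := fun h => hAB (Subtype.ext (sub_eq_zero.1 h))
  obtain ⟨v, hv⟩ := exists_cross_ne_zero hD
  obtain ⟨w, hw⟩ := exists_dot_ne_zero
    (insert (cross3 v (A - B)) (F.image fun C : sphereSet => cross3 ((C : Fin 3 → ℝ) - A) (A - B)))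
    (by
      intro g hg
      rcases Finset.mem_insert.1 hg with rfl | hg
      · exact hv
      · obtain ⟨C, hC, rfl⟩ := Finset.mem_image.1 hg
        refine cross_ne_zero A.2 B.2 C.2 (fun h => hAB (Subtype.ext h)) ?_ ?_
        · intro h; exact hA (Subtype.ext h ▸ hC)
        · intro h; exact hB (Subtype.ext h ▸ hC))
  -- The triple product identity turns `w ⬝ (x × D)` into `x ⬝ (D × w)`.
  have triple : ∀ x D : Fin 3 → ℝ, dot3 w (cross3 x D) = dot3 (cross3 D w) x := by
    intro x D
    simp [dot3, cross3_eq]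
    ring
  refine ⟨cross3 (A - B) w, fun h => ?_, ?_, fun C hC h => ?_⟩
  · have h1 := hw _ (Finset.mem_insert_self _ _)
    rw [triple] at h1
    have hz : cross3 ((A : Fin 3 → ℝ) - B) w = 0 := by
      by_contra hz
      exact dot3_self_ne_zero hz h
    rw [hz] at h1
    simp [dot3] at h1
  · simp [dot3, cross3_eq]
    ring
  · refine hw _ (Finset.mem_insert_of_mem (Finset.mem_image_of_mem _ hC)) ?_
    rw [triple]
    simp only [dot3, Pi.sub_apply] at h ⊢
    linarith

/-! ### Moving one point -/

/-- Two points of equal height along the axis `u` differ by a rotation about `u`. The half-turn is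
the case `c = 0`. -/
theorem exists_rot_eq {A B u : Fin 3 → ℝ} (hA : A ∈ sphereSet) (hB : B ∈ sphereSet)
    (hAB : A ≠ B) (hu : dot3 u u ≠ 0) (huAB : dot3 u A = dot3 u B) :
    ∃ c, rot c 1 u A = B := by
  have hA' : A 0 ^ 2 + A 1 ^ 2 + A 2 ^ 2 = 1 := hA
  have hB' : B 0 ^ 2 + B 1 ^ 2 + B 2 ^ 2 = 1 := hB
  have hD := dot3_self_ne_zero (sub_ne_zero.2 hAB)
  -- With quaternions, `(c + u) A = B (c + u)` means `c (A - B) = (A + B) × u`. The two sides are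
  -- parallel because `A - B` is orthogonal to both `A + B` and `u`.
  obtain ⟨c, hc⟩ : ∃ c, ∀ i, c * (A i - B i) = cross3 (A + B) u i := by
    refine ⟨dot3 (cross3 (A + B) u) (A - B) / dot3 (A - B) (A - B), fun i => ?_⟩
    have o1 : (A 0 + B 0) * (A 0 - B 0) + (A 1 + B 1) * (A 1 - B 1)
        + (A 2 + B 2) * (A 2 - B 2) = 0 := by linear_combination hA' - hB'
    have o2 : u 0 * (A 0 - B 0) + u 1 * (A 1 - B 1) + u 2 * (A 2 - B 2) = 0 := by
      unfold dot3 at huAB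
      linear_combination huAB
    rw [div_mul_eq_mul_div, div_eq_iff hD]
    fin_cases i <;> simp [dot3, cross3_eq]
    · linear_combination ((A 1 - B 1) * (A 2 + B 2) - (A 2 - B 2) * (A 1 + B 1)) * o2 -
        ((A 1 - B 1) * u 2 - (A 2 - B 2) * u 1) * o1
    · linear_combination ((A 2 - B 2) * (A 0 + B 0) - (A 0 - B 0) * (A 2 + B 2)) * o2 -
        ((A 2 - B 2) * u 0 - (A 0 - B 0) * u 2) * o1
    · linear_combination ((A 0 - B 0) * (A 1 + B 1) - (A 1 - B 1) * (A 0 + B 0)) * o2 -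
        ((A 0 - B 0) * u 1 - (A 1 - B 1) * u 0) * o1
  have c0 := hc 0
  have c1 := hc 1
  have c2 := hc 2
  simp [cross3_eq] at c0 c1 c2
  have hd : c ^ 2 + 1 ^ 2 * dot3 u u ≠ 0 := by
    have := dot3_self_nonneg u
    positivity
  have e : (1 : Fin 3) + 2 = 0 := rfl
  have e' : (2 : Fin 3) + 1 = 0 := rfl
  have e'' : (2 : Fin 3) + 2 = 1 := rfl
  have e3 : (1 : Fin 3) + 1 = 2 := rfl
  refine ⟨c, funext fun i => ?_⟩
  rw [rot, div_eq_iff hd]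
  fin_cases i <;>
    simp only [dot3, zero_add, e, e', e'', e3, Fin.isValue, Fin.zero_eta, Fin.mk_one,
      Fin.reduceFinMk] at huAB ⊢
  · linear_combination c * c0 + u 1 * c2 - u 2 * c1 + u 0 * huAB
  · linear_combination c * c1 + u 2 * c0 - u 0 * c2 + u 1 * huAB
  · linear_combination c * c2 + u 0 * c1 - u 1 * c0 + u 2 * huAB

/-- The inductive step: a point can be moved while finitely many other points stay fixed. -/
theorem exists_move {A B : sphereSet} (F : Finset sphereSet) (hA : A ∉ F) (hB : B ∉ F) :
    ∃ φ, IsAlgAut φ ∧ φ A = B ∧ ∀ C ∈ F, φ C = C := by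
  by_cases hAB : A = B
  · exact ⟨_, IsAlgAut.refl, hAB, fun _ _ => rfl⟩
  obtain ⟨u, hu, huAB, huF⟩ := exists_axis hAB F hA hB
  obtain ⟨c₀, hc₀⟩ := exists_rot_eq A.2 B.2 (fun h => hAB (Subtype.ext h)) hu huAB
  -- Equal to `1` at the height of `A` and to `0` at the heights of the points of `F`.
  let h : ℝ → ℝ := fun z => ∏ C ∈ F, (z - dot3 u C) * (dot3 u A - dot3 u C)⁻¹
  have h1 : h (dot3 u A) = 1 := Finset.prod_eq_one fun C hC =>
    mul_inv_cancel₀ (sub_ne_zero.2 (huF C hC))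
  have h0 : ∀ C ∈ F, h (dot3 u C) = 0 := fun C hC =>
    Finset.prod_eq_zero hC (by simp)
  have hh : IsRegularOnSphere fun x => h (dot3 u x) :=
    .prod F fun C => ((isRegularOnSphere_dot3 u).sub (.const _)).mul (.const _)
  have hu0 : 0 < dot3 u u := lt_of_le_of_ne (dot3_self_nonneg u) hu.symm
  have hne : ∀ z, (1 - h z + c₀ * h z) ^ 2 + h z ^ 2 * dot3 u u ≠ 0 := by
    intro z
    by_cases hz : h z = 0
    · simp [hz]
    · positivity
  refine ⟨twist u (fun z => 1 - h z + c₀ * h z) h hne,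
    isAlgAut_twist hne (((IsRegularOnSphere.const 1).sub hh).add ((IsRegularOnSphere.const c₀).mul hh)) hh,
    Subtype.ext ?_, fun C hC => Subtype.ext ?_⟩
  · simpa [twist, h1] using hc₀
  · funext i
    simp [twist, h0 C hC, rot]

/-- the group of algebraic automorphisms of the real algebraic sphere `S²`
acts `n`-transitively: any `n`-tuple of pairwise distinct points can be carried to any
other by a bijection of `S²` whose coordinate functions, and those of its inverse, are
regular. -/
theorem sphere_aut_n_transitive (n : ℕ) (P Q : Fin n → sphereSet)
    (hP : Function.Injective P) (hQ : Function.Injective Q) :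
    ∃ φ : sphereSet ≃ sphereSet,
      (∀ i : Fin 3, IsRegularOnSphere fun x => (φ x : Fin 3 → ℝ) i) ∧
      (∀ i : Fin 3, IsRegularOnSphere fun x => (φ.symm x : Fin 3 → ℝ) i) ∧
      ∀ j, φ (P j) = Q j := by
  classical
  suffices H : ∀ t : Finset (Fin n), ∃ φ, IsAlgAut φ ∧ ∀ j ∈ t, φ (P j) = Q j by
    obtain ⟨φ, hφ, h⟩ := H Finset.univ
    exact ⟨φ, hφ.1, hφ.2, fun j => h j (Finset.mem_univ j)⟩
  intro t
  induction t using Finset.induction_on with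
  | empty => exact ⟨_, IsAlgAut.refl, by simp⟩
  | insert a t ha ih =>
    obtain ⟨φ, hφ, h⟩ := ih
    obtain ⟨ψ, hψ, hψa, hψF⟩ := exists_move (A := φ (P a)) (B := Q a) (t.image Q)
      (by
        intro hm
        obtain ⟨j, hj, hjQ⟩ := Finset.mem_image.1 hm
        rw [← h j hj] at hjQ
        exact ha (hP (φ.injective hjQ) ▸ hj))
      (by
        intro hm
        obtain ⟨j, hj, hjQ⟩ := Finset.mem_image.1 hm
        exact ha (hQ hjQ ▸ hj))
    refine ⟨φ.trans ψ, hφ.trans hψ, fun j hj => ?_⟩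
    rcases Finset.mem_insert.1 hj with rfl | hj
    · exact hψa
    · simpa [h j hj] using hψF _ (Finset.mem_image_of_mem Q hj)
end
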